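/- Let n ∈ ℕ and define ω : ℝ → ℝ^{2n} by ω(x) = (cos x, sin x, cos 2x, sin 2x, …, cos nx, sin nx). If I is an open interval of length at most π, then ω is a (2n)-dimensional positive Chebyshev system over I; that is, for all x_1 < x_2 < ⋯ < x_{2n} in I, the determinant Φ_ω(x_1,…,x_{2n}) = det(ω_i(x_j)) is positive. -/

import Mathlib

/-- `Phi ω x` is the determinant `det(ωᵢ(xⱼ))` of an `n`-tuple of functions
evaluated at an `n`-tuple of points. -/
noncomputable def Phi {n : ℕ} (ω : Fin n → ℝ → ℝ) (x : Fin n → ℝ) : ℝ :=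
  (Matrix.of fun i j => ω i (x j)).det

/-- `ω` is an `n`-dimensional positive Chebyshev system over `H`:
`Phi ω` is positive on all strictly increasing `n`-tuples of elements of `H`. -/
def IsPosChebyshev {n : ℕ} (ω : Fin n → ℝ → ℝ) (H : Set ℝ) : Prop :=
  ∀ x : Fin n → ℝ, StrictMono x → (∀ j, x j ∈ H) → 0 < Phi ω x

/-- The `2n`-dimensional trigonometric system
`(cos x, sin x, cos 2x, sin 2x, …, cos nx, sin nx)`:
index `2k` is `cos ((k+1)·x)`, index `2k+1` is `sin ((k+1)·x)`. -/
noncomputable def trigOmegaEven (n : ℕ) : Fin (2 * n) → ℝ → ℝ :=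
  fun i x =>
    if (i : ℕ) % 2 = 0 then Real.cos (((((i : ℕ) / 2 + 1) : ℕ) : ℝ) * x)
    else Real.sin (((((i : ℕ) / 2 + 1) : ℕ) : ℝ) * x)


lemma gv_aux (n : ℕ) (z : Fin (2 * n) → ℂ) (nn : Fin (2 * n + 1)) (hnn : (nn : ℕ) = n) :
    (Matrix.of fun i j => z j ^ ((nn.succAbove i : Fin (2 * n + 1)) : ℕ)).det =
      (-1) ^ n * (∏ i, ∏ j ∈ Finset.Ioi i, (z j - z i)) *
        (∏ j, (Polynomial.X - Polynomial.C (z j))).coeff n := by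
  have h1 := Matrix.det_vandermonde
    (Fin.cons Polynomial.X (fun j => Polynomial.C (z j)) : Fin (2 * n + 1) → Polynomial ℂ)
  rw [Matrix.det_succ_row_zero, Fin.prod_univ_succ] at h1
  simp only [Fin.prod_Ioi_zero, Fin.prod_Ioi_succ, Fin.cons_succ, Fin.cons_zero] at h1
  have h2 : ∏ j, (Polynomial.C (z j) - Polynomial.X) =
      ∏ j, (Polynomial.X - Polynomial.C (z j)) := by
    have : ∀ j, (Polynomial.C (z j) - Polynomial.X) =
        (-1) * (Polynomial.X - Polynomial.C (z j)) := fun j => by ring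
    simp_rw [this, Finset.prod_mul_distrib]
    simp [pow_mul]
  rw [h2] at h1
  have h3 : ∀ k : Fin (2 * n + 1), ((Matrix.vandermonde
      (Fin.cons Polynomial.X (fun j => Polynomial.C (z j)) :
        Fin (2 * n + 1) → Polynomial ℂ)).submatrix Fin.succ k.succAbove).det =
      Polynomial.C (Matrix.of fun i j => z j ^ ((k.succAbove i : Fin (2 * n + 1)) : ℕ)).det := by
    intro k
    rw [← Matrix.det_transpose, RingHom.map_det]
    congr 1
    ext1 i j
    simp only [Matrix.transpose_apply, Matrix.submatrix_apply, Matrix.vandermonde_apply, Fin.cons_succ,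
      RingHom.mapMatrix_apply, Matrix.map_apply, Matrix.of_apply, map_pow]
  have h4 : (∏ i, ∏ j ∈ Finset.Ioi i, (Polynomial.C (z j) - Polynomial.C (z i))) =
      Polynomial.C (∏ i, ∏ j ∈ Finset.Ioi i, (z j - z i)) := by
    simp [map_prod]
  rw [h4] at h1
  simp_rw [h3] at h1
  have h5 := congrArg (fun p => Polynomial.coeff p n) h1
  simp only [Polynomial.finsetSum_coeff, Polynomial.coeff_mul_C] at h5
  rw [Finset.sum_eq_single nn] at h5
  · simp only [Matrix.vandermonde_apply, Fin.cons_zero, hnn] at h5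
    have h6 : (((-1 : Polynomial ℂ)) ^ n * Polynomial.X ^ n).coeff n = (-1) ^ n := by
      have : ((-1 : Polynomial ℂ)) ^ n = Polynomial.C ((-1) ^ n) := by simp
      rw [this, Polynomial.coeff_C_mul]; simp
    rw [h6] at h5
    have h7 : ((-1 : ℂ) ^ n) * (-1) ^ n = 1 := by rw [← mul_pow]; simp
    linear_combination ((-1 : ℂ) ^ n) * h5 - (Matrix.of fun i j => z j ^ ((nn.succAbove i : Fin (2 * n + 1)) : ℕ)).det * h7
  · intro b _ hb
    have : ((-1 : Polynomial ℂ)) ^ (b : ℕ) = Polynomial.C ((-1) ^ (b : ℕ)) := by simp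
    simp only [Matrix.vandermonde_apply, Fin.cons_zero]
    rw [this, Polynomial.coeff_C_mul, Polynomial.coeff_X_pow, if_neg]
    · simp
    · intro h; apply hb; ext; omega
  · simp

lemma perm_aux (n : ℕ) : ∃ τ : Equiv.Perm (Fin (2 * n)), Equiv.Perm.sign τ = 1 ∧
    ∀ i, ((τ i : Fin (2 * n)) : ℕ) =
      if (i : ℕ) % 2 = 0 then n - 1 - (i : ℕ) / 2 else n + (i : ℕ) / 2 := by
  let f : Fin (2 * n) → Fin (2 * n) := fun i =>
    ⟨if (i : ℕ) % 2 = 0 then n - 1 - (i : ℕ) / 2 else n + (i : ℕ) / 2, by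
      have := i.2; split_ifs <;> omega⟩
  have hf : Function.Injective f := by
    intro i j h
    have h' := congrArg Fin.val h
    have := i.2
    have := j.2
    simp only [f] at h'
    ext
    split_ifs at h' <;> omega
  let τ := Equiv.ofBijective f (Finite.injective_iff_bijective.mp hf)
  have hτ : ∀ i, ((τ i : Fin (2 * n)) : ℕ) =
      if (i : ℕ) % 2 = 0 then n - 1 - (i : ℕ) / 2 else n + (i : ℕ) / 2 := fun i => rfl
  refine ⟨τ, ?_, hτ⟩
  rw [Equiv.Perm.sign_eq_prod_prod_Iio]
  apply Finset.prod_eq_one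
  intro j _
  have hj := j.2
  by_cases hp : (j : ℕ) % 2 = 0
  · have : ∀ i ∈ Finset.Iio j, (if τ i < τ j then (1 : ℤˣ) else -1) = -1 := by
      intro i hi
      rw [if_neg]
      rw [Finset.mem_Iio, Fin.lt_def] at hi
      rw [Fin.lt_def, hτ, hτ, if_pos hp]
      split_ifs <;> omega
    rw [Finset.prod_congr rfl this, Finset.prod_const, Fin.card_Iio]
    exact Even.neg_one_pow (Nat.even_iff.mpr hp)
  · apply Finset.prod_eq_one
    intro i hi
    rw [if_pos]
    rw [Finset.mem_Iio, Fin.lt_def] at hi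
    rw [Fin.lt_def, hτ, hτ, if_neg hp]
    split_ifs <;> omega

noncomputable def kap (i : ℕ) : ℂ :=
  if i % 2 = 0 then -((i / 2 + 1 : ℕ) : ℂ) else ((i / 2 + 1 : ℕ) : ℂ)

lemma det_trig_aux (n : ℕ) (x : Fin (2 * n) → ℝ) :
    ((Phi (trigOmegaEven n) x : ℝ) : ℂ) = (1 / (2 * Complex.I)) ^ n *
      (Matrix.of fun i j : Fin (2 * n) => Complex.exp (Complex.I * (kap i * x j))).det := by
  let f : Fin 2 × Fin n → Fin (2 * n) := fun p => ⟨2 * (p.2 : ℕ) + (p.1 : ℕ), by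
    have := p.1.2; have := p.2.2; omega⟩
  have hf : Function.Bijective f := by
    rw [Fintype.bijective_iff_injective_and_card]
    refine ⟨?_, by simp⟩
    rintro ⟨a, b⟩ ⟨c, d⟩ h
    have h' := congrArg Fin.val h
    have := a.2
    have := c.2
    simp only [f] at h'
    ext <;> simp only <;> omega
  let e := Equiv.ofBijective f hf
  have he : ∀ a b, ((e (a, b) : Fin (2 * n)) : ℕ) = 2 * (b : ℕ) + (a : ℕ) := fun a b => rfl
  let T : Matrix (Fin 2) (Fin 2) ℂ :=
    !![1 / 2, 1 / 2; -(1 / (2 * Complex.I)), 1 / (2 * Complex.I)]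
  have hT : T.det = 1 / (2 * Complex.I) := by
    simp only [T, Matrix.det_fin_two_of]; ring
  have hprod : (Matrix.blockDiagonal (fun _ : Fin n => T)).det = (1 / (2 * Complex.I)) ^ n := by
    rw [Matrix.det_blockDiagonal]; simp [hT]
  rw [← hprod, ← Matrix.det_submatrix_equiv_self e (Matrix.of _), ← Matrix.det_mul]
  unfold Phi
  rw [← Matrix.det_submatrix_equiv_self e (Matrix.of _)]
  have := RingHom.map_det Complex.ofRealHom
    ((Matrix.of fun i j => trigOmegaEven n i (x j)).submatrix e e)
  rw [Complex.ofRealHom_eq_coe] at this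
  rw [this]
  congr 1
  ext1 p q
  obtain ⟨a, b⟩ := p
  rw [Matrix.mul_apply, Fintype.sum_prod_type]
  simp only [Matrix.blockDiagonal_apply, Fin.sum_univ_two, ite_mul, zero_mul,
    Finset.sum_ite_eq, Finset.mem_univ, if_true, Matrix.submatrix_apply, Matrix.of_apply, he,
    RingHom.mapMatrix_apply, Matrix.map_apply, Complex.ofRealHom_eq_coe]
  have e0 : (2 * (b : ℕ)) % 2 = 0 := by omega
  have e1 : ¬ (2 * (b : ℕ) + 1) % 2 = 0 := by omega
  have e2 : (2 * (b : ℕ)) / 2 = b := by omega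
  have e3 : (2 * (b : ℕ) + 1) / 2 = b := by omega
  have hI := Complex.I_ne_zero
  fin_cases a
  · simp [trigOmegaEven, he, kap, T, Complex.cos]
    simp only [e3]
    ring_nf
  · simp [trigOmegaEven, he, kap, T, Complex.sin]
    simp only [e3]
    push_cast
    ring_nf

noncomputable def zz {N : ℕ} (x : Fin N → ℝ) (j : Fin N) : ℂ := Complex.exp (Complex.I * x j)

noncomputable def FF (n : ℕ) (x : Fin (2 * n) → ℝ) : ℂ :=
  (-1) ^ n * (∏ j, Complex.exp (-(Complex.I * x j / 2))) *
    (∏ j, (Polynomial.X - Polynomial.C (zz x j))).coeff n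

lemma zz_sub {N : ℕ} (x : Fin N → ℝ) (i j : Fin N) :
    zz x j - zz x i = (((1 + Complex.I) * Complex.exp (Complex.I * x i / 2)) *
      ((1 + Complex.I) * Complex.exp (Complex.I * x j / 2))) *
      ((Real.sin ((x j - x i) / 2) : ℝ) : ℂ) := by
  have h1 : (1 + Complex.I) * (1 + Complex.I) = 2 * Complex.I := by
    linear_combination Complex.I_mul_I
  have e1 : zz x j = Complex.exp (Complex.I * x i / 2) * Complex.exp (Complex.I * x j / 2) *
      Complex.exp (((x j - x i) / 2) * Complex.I) := by
    unfold zz; rw [← Complex.exp_add, ← Complex.exp_add]; congr 1; ring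
  have e2 : zz x i = Complex.exp (Complex.I * x i / 2) * Complex.exp (Complex.I * x j / 2) *
      Complex.exp (-((x j - x i) / 2) * Complex.I) := by
    unfold zz; rw [← Complex.exp_add, ← Complex.exp_add]; congr 1; ring
  rw [e1, e2]
  push_cast
  rw [Complex.sin]
  linear_combination (-(Complex.exp (Complex.I * x i / 2) * Complex.exp (Complex.I * x j / 2)) *
    ((Complex.exp (-((x j - x i) / 2) * Complex.I) - Complex.exp (((x j - x i) / 2) * Complex.I)) * Complex.I / 2)) * h1
    + (-(Complex.exp (Complex.I * x i / 2) * Complex.exp (Complex.I * x j / 2)) *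
    ((Complex.exp (-((x j - x i) / 2) * Complex.I) - Complex.exp (((x j - x i) / 2) * Complex.I)))) * Complex.I_mul_I

lemma vand_aux {N : ℕ} (x : Fin N → ℝ) :
    (∏ i, ∏ j ∈ Finset.Ioi i, (zz x j - zz x i)) =
      (∏ i, ((1 + Complex.I) * Complex.exp (Complex.I * x i / 2)) ^ (N - 1)) *
      ((∏ i, ∏ j ∈ Finset.Ioi i, Real.sin ((x j - x i) / 2) : ℝ) : ℂ) := by
  simp_rw [zz_sub, Finset.prod_mul_distrib (f := fun j => (1 + Complex.I) * Complex.exp (Complex.I * x _ / 2) *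
      ((1 + Complex.I) * Complex.exp (Complex.I * x j / 2)))]
  rw [Finset.prod_mul_distrib]
  congr 1
  · have := Finset.prod_prod_Ioi_mul_eq_prod_prod_off_diag
      (fun _ i : Fin N => ((1 + Complex.I) * Complex.exp (Complex.I * x i / 2)))
    rw [this]
    apply Finset.prod_congr rfl
    intro i _
    rw [Finset.prod_const, Finset.card_compl]
    simp
  · push_cast; rfl

lemma phi_eq (n : ℕ) (hn : 0 < n) (x : Fin (2 * n) → ℝ) :
    ((Phi (trigOmegaEven n) x : ℝ) : ℂ) =
      ((4 ^ (n * (n - 1)) * ∏ i, ∏ j ∈ Finset.Ioi i, Real.sin ((x j - x i) / 2) : ℝ) : ℂ) *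
        FF n x := by
  obtain ⟨τ, hs, hτ⟩ := perm_aux n
  let nn : Fin (2 * n + 1) := ⟨n, by omega⟩
  have hE : (Matrix.of fun i j : Fin (2 * n) => Complex.exp (Complex.I * (kap i * x j))) =
      (Matrix.of fun s j : Fin (2 * n) => Complex.exp (-(Complex.I * (n * x j))) *
        (Matrix.of fun i j => zz x j ^ ((nn.succAbove i : Fin (2 * n + 1)) : ℕ)) s j).submatrix
          τ id := by
    ext1 i j
    simp only [Matrix.submatrix_apply, Matrix.of_apply, id, zz]
    rw [← Complex.exp_nat_mul, ← Complex.exp_add]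
    congr 1
    have hi := i.2
    have h := hτ i
    by_cases hp : (i : ℕ) % 2 = 0
    · rw [if_pos hp] at h
      have h2 : ((nn.succAbove (τ i) : Fin (2 * n + 1)) : ℕ) = n - 1 - (i : ℕ) / 2 := by
        rw [Fin.succAbove_of_castSucc_lt]
        · simpa using h
        · rw [Fin.lt_def]; simp only [Fin.val_castSucc, nn]; omega
      have h3 : (n : ℂ) = ((n - 1 - (i : ℕ) / 2 : ℕ) : ℂ) + (((i : ℕ) / 2 + 1 : ℕ) : ℂ) := by
        rw [← Nat.cast_add]; congr 1; omega
      rw [h2, kap, if_pos hp, h3]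
      ring
    · rw [if_neg hp] at h
      have h2 : ((nn.succAbove (τ i) : Fin (2 * n + 1)) : ℕ) = n + ((i : ℕ) / 2 + 1) := by
        rw [Fin.succAbove_of_le_castSucc]
        · simp only [Fin.val_succ]; omega
        · rw [Fin.le_def]; simp only [Fin.val_castSucc, nn]; omega
      rw [h2, kap, if_neg hp, Nat.cast_add n]
      ring
  rw [det_trig_aux, hE, Matrix.det_permute, hs, Matrix.det_mul_row, gv_aux n _ nn rfl, vand_aux]
  unfold FF
  have hexp : (∏ j, Complex.exp (-(Complex.I * (n * x j)))) *
      (∏ i, ((1 + Complex.I) * Complex.exp (Complex.I * x i / 2)) ^ (2 * n - 1)) =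
      (1 + Complex.I) ^ ((2 * n - 1) * (2 * n)) *
        ∏ j, Complex.exp (-(Complex.I * x j / 2)) := by
    have : (1 + Complex.I) ^ ((2 * n - 1) * (2 * n)) =
        ∏ _j : Fin (2 * n), (1 + Complex.I) ^ (2 * n - 1) := by
      simp [pow_mul]
    rw [this, ← Finset.prod_mul_distrib, ← Finset.prod_mul_distrib]
    apply Finset.prod_congr rfl
    intro j _
    rw [mul_pow, ← Complex.exp_nat_mul, mul_left_comm, ← Complex.exp_add]
    congr 2
    rw [Nat.cast_sub (by omega)]
    push_cast
    ring
  have hconst : (1 / (2 * Complex.I)) ^ n * (1 + Complex.I) ^ ((2 * n - 1) * (2 * n)) =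
      (4 : ℂ) ^ (n * (n - 1)) := by
    have h1 : (1 + Complex.I) ^ 2 = 2 * Complex.I := by
      linear_combination Complex.I_mul_I
    have h2 : (2 * n - 1) * (2 * n) = 2 * (n + 2 * (n * (n - 1))) := by
      obtain ⟨m, rfl⟩ : ∃ m, n = m + 1 := ⟨n - 1, by omega⟩
      rw [show 2 * (m + 1) - 1 = 2 * m + 1 by omega, Nat.add_sub_cancel]
      ring
    have h3 : (2 * Complex.I) ^ 2 = -4 := by
      linear_combination 4 * Complex.I_mul_I
    rw [h2, pow_mul, h1, pow_add, ← mul_assoc, ← mul_pow, pow_mul _ 2, h3]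
    have h4 : 1 / (2 * Complex.I) * (2 * Complex.I) = 1 := by
      have := Complex.I_ne_zero
      field_simp
    rw [h4, one_pow, one_mul, Even.neg_pow (Nat.even_mul_pred_self n)]
  push_cast
  rw [← hconst]
  linear_combination ((1 / (2 * Complex.I)) ^ n * (-1) ^ n *
    (∏ i, ∏ j ∈ Finset.Ioi i, Complex.sin ((x j - x i) / 2)) *
    (∏ j, (Polynomial.X - Polynomial.C (zz x j))).coeff n) * hexp

lemma gl_aux (w : ℂ) (p : Polynomial ℂ) (k : ℕ) (hk : k < p.natDegree)
    (hp : ∀ z, p.eval z = 0 → 0 < (w * z).re) :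
    ∀ z, (Polynomial.derivative^[k] p).eval z = 0 → 0 < (w * z).re := by
  induction k with
  | zero => simpa using hp
  | succ k ih =>
    intro z hz
    have ih := ih (by omega)
    rw [Function.iterate_succ_apply'] at hz
    set q := Polynomial.derivative^[k] p with hq
    have hdeg : q.natDegree = p.natDegree - k := by
      rw [hq]
      clear * -
      induction k with
      | zero => simp
      | succ k ih =>
        rw [Function.iterate_succ_apply', Polynomial.natDegree_derivative, ih]; omega
    have hdeg' : q.derivative.natDegree = q.natDegree - 1 := Polynomial.natDegree_derivative q
    have hq0 : 0 < q.degree := by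
      rw [← Polynomial.natDegree_pos_iff_degree_pos]; omega
    have hd0 : q.derivative ≠ 0 := by
      intro h
      have := Polynomial.derivative_eq_zero.mp h
      omega
    have hmem := Polynomial.rootSet_derivative_subset_convexHull_rootSet hq0
      (show z ∈ q.derivative.rootSet ℂ by
        rw [Polynomial.mem_rootSet]; exact ⟨hd0, by simpa using hz⟩)
    have hconv : Convex ℝ {z : ℂ | 0 < (w * z).re} := by
      intro a ha b hb s t hs ht hst
      simp only [Set.mem_ofPred_eq] at *
      have : (w * (s • a + t • b)).re = s * (w * a).re + t * (w * b).re := by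
        simp; ring
      rw [this]
      rcases hs.lt_or_eq with h | h
      · have := mul_pos h ha
        have := mul_nonneg ht hb.le
        linarith
      · have : t = 1 := by linarith
        rw [← h, this]; linarith
    refine convexHull_min ?_ hconv hmem
    intro a ha
    rw [Polynomial.mem_rootSet] at ha
    exact ih a (by simpa using ha.2)

lemma FF_ne_zero (n : ℕ) (hn : 0 < n) (x : Fin (2 * n) → ℝ) (c : ℝ)
    (hx : ∀ j, |x j - c| < Real.pi / 2) : FF n x ≠ 0 := by
  set P := ∏ j, (Polynomial.X - Polynomial.C (zz x j)) with hP
  have hdeg : P.natDegree = 2 * n := by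
    rw [hP, Polynomial.natDegree_prod_of_monic _ _ (fun j _ => Polynomial.monic_X_sub_C _)]
    simp
  have hroots : ∀ z, P.eval z = 0 → 0 < (Complex.exp (-(Complex.I * c)) * z).re := by
    intro z hz
    rw [hP, Polynomial.eval_prod, Finset.prod_eq_zero_iff] at hz
    obtain ⟨j, _, hj⟩ := hz
    have : z = zz x j := by simpa [sub_eq_zero] using hj
    rw [this, zz, ← Complex.exp_add]
    have : -(Complex.I * c) + Complex.I * x j = ((x j - c : ℝ) : ℂ) * Complex.I := by
      push_cast; ring
    rw [this, Complex.exp_ofReal_mul_I_re]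
    have := abs_lt.mp (hx j)
    exact Real.cos_pos_of_mem_Ioo ⟨by linarith, by linarith⟩
  have hG := gl_aux _ P n (by omega) hroots 0
  have hc : P.coeff n ≠ 0 := by
    intro h
    have : (Polynomial.derivative^[n] P).eval 0 = 0 := by
      rw [← Polynomial.coeff_zero_eq_eval_zero, Polynomial.coeff_iterate_derivative]
      simp [h]
    have := hG this
    simp at this
  unfold FF
  refine mul_ne_zero (mul_ne_zero (by simp) ?_) hc
  exact Finset.prod_ne_zero_iff.mpr fun j _ => Complex.exp_ne_zero _

lemma FF_const (n : ℕ) (c : ℝ) : FF n (fun _ => c) = ((2 * n).choose n : ℂ) := by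
  unfold FF zz
  rw [Finset.prod_const, Finset.prod_const, Finset.card_univ, Fintype.card_fin,
    sub_eq_add_neg, ← Polynomial.C_neg, Polynomial.coeff_X_add_C_pow]
  rw [show 2 * n - n = n by omega, ← Complex.exp_nat_mul]
  rw [neg_pow (Complex.exp (Complex.I * c)), ← Complex.exp_nat_mul]
  have h7 : ((-1 : ℂ) ^ n) * (-1) ^ n = 1 := by rw [← mul_pow]; simp
  have h8 : Complex.exp (((2 * n : ℕ) : ℂ) * -(Complex.I * c / 2)) *
      Complex.exp (n * (Complex.I * c)) = 1 := by
    rw [← Complex.exp_add]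
    convert Complex.exp_zero using 2
    push_cast; ring
  linear_combination ((2 * n).choose n : ℂ) * h7 + ((2 * n).choose n : ℂ) * ((-1 : ℂ) ^ n) * (-1) ^ n * h8

lemma coeff_cont {N : ℕ} (s : Finset (Fin N)) (g : ℝ → Fin N → ℂ)
    (hg : ∀ j, Continuous fun t => g t j) (m : ℕ) :
    Continuous fun t => (∏ j ∈ s, (Polynomial.X - Polynomial.C (g t j))).coeff m := by
  induction s using Finset.induction_on generalizing m with
  | empty => simpa using continuous_const
  | insert a s ha ih =>
    simp_rw [Finset.prod_insert ha, Polynomial.coeff_mul]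
    refine continuous_finsetSum _ fun p _ => Continuous.mul ?_ (ih _)
    simp_rw [Polynomial.coeff_sub, Polynomial.coeff_C]
    split_ifs
    · exact continuous_const.sub (hg a)
    · exact continuous_const

/-- The `2n`-dimensional trigonometric system `(cos x, sin x, …, cos nx, sin nx)` is a
positive Chebyshev system over any open interval of length at most `π`: for all
`x₁ < ⋯ < x_{2n}` in the interval, `det(ωᵢ(xⱼ))` is positive. -/
theorem trigOmegaEven_posChebyshev (n : ℕ) (hn : 0 < n) :
    ∀ a b : ℝ, b - a ≤ Real.pi →
      IsPosChebyshev (trigOmegaEven n) (Set.Ioo a b) := by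
  intro a b hab x hx hmem
  set c := (a + b) / 2 with hc
  have hxc : ∀ j, |x j - c| < Real.pi / 2 := by
    intro j
    obtain ⟨h1, h2⟩ := hmem j
    rw [abs_lt]; constructor <;> linarith
  let y : ℝ → Fin (2 * n) → ℝ := fun t j => c + t * (x j - c)
  have hy1 : y 1 = x := by funext j; simp [y]
  have hy0 : y 0 = fun _ => c := by funext j; simp [y]
  have hyc : ∀ t ∈ Set.Icc (0 : ℝ) 1, ∀ j, |y t j - c| < Real.pi / 2 := by
    intro t ht j
    have : y t j - c = t * (x j - c) := by simp [y]
    rw [this, abs_mul, abs_of_nonneg ht.1]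
    exact (mul_le_of_le_one_left (abs_nonneg _) ht.2).trans_lt (hxc j)
  have hS : ∀ t ∈ Set.Ioc (0 : ℝ) 1,
      0 < (4 ^ (n * (n - 1)) * ∏ i, ∏ j ∈ Finset.Ioi i, Real.sin ((y t j - y t i) / 2) : ℝ) := by
    intro t ht
    refine mul_pos (by positivity) ?_
    refine Finset.prod_pos fun i _ => Finset.prod_pos fun j hj => ?_
    have hij := hx (Finset.mem_Ioi.mp hj)
    have h1 := abs_lt.mp (hyc t ⟨ht.1.le, ht.2⟩ i)
    have h2 := abs_lt.mp (hyc t ⟨ht.1.le, ht.2⟩ j)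
    have h3 : y t j - y t i = t * (x j - x i) := by simp only [y]; ring
    have h4 : 0 < t * (x j - x i) := mul_pos ht.1 (by linarith)
    apply Real.sin_pos_of_pos_of_lt_pi <;> linarith [Real.pi_pos]
  have him : ∀ t ∈ Set.Ioc (0 : ℝ) 1, (FF n (y t)).im = 0 := by
    intro t ht
    have h := congrArg Complex.im (phi_eq n hn (y t))
    rw [Complex.ofReal_im, Complex.im_ofReal_mul] at h
    exact (mul_eq_zero.mp h.symm).resolve_left (hS t ht).ne'
  have hcont : Continuous fun t => (FF n (y t)).re := by
    apply Complex.continuous_re.comp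
    unfold FF
    refine Continuous.mul (by fun_prop) ?_
    apply coeff_cont Finset.univ (fun t j => zz (y t) j)
    intro j
    unfold zz
    fun_prop
  have hre0 : 0 < (FF n (y 0)).re := by
    rw [hy0, FF_const, Complex.natCast_re]
    exact_mod_cast Nat.choose_pos (by omega)
  have hre1 : 0 < (FF n (y 1)).re := by
    by_contra hneg
    push Not at hneg
    obtain ⟨t, ht, ht0⟩ := intermediate_value_Icc' (zero_le_one' ℝ) hcont.continuousOn
      (show (0 : ℝ) ∈ Set.Icc _ _ from ⟨hneg, hre0.le⟩)
    simp only at ht0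
    have htpos : 0 < t := by
      rcases ht.1.lt_or_eq with h | h
      · exact h
      · rw [← h] at ht0; exact absurd ht0 hre0.ne'
    exact FF_ne_zero n hn (y t) c (hyc t ht) (Complex.ext ht0 (him t ⟨htpos, ht.2⟩))
  have h := congrArg Complex.re (phi_eq n hn (y 1))
  rw [Complex.ofReal_re, Complex.re_ofReal_mul] at h
  rw [← hy1, h]
  exact mul_pos (hS 1 ⟨one_pos, le_rfl⟩) hre1
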